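/- arXiv:2009.04243 — 2 statements merged into one kernel-verified Lean document; each statement's English description precedes it below -/
import Mathlib

section
/- Let h ≥ 1 be a natural number and let K be a finite field with q elements whose characteristic does not divide h. Let l be the number of elements d ∈ K with d^h = 1. Then for every n ≥ 1, the number of n×n upper triangular matrices g over K satisfying g^h = 1 (the identity matrix) equals Σ_{(n₁,…,n_l)} (n! / (n₁!⋯n_l!)) · q^(Σ_{1 ≤ i < j ≤ l} n_i·n_j), where the sum ranges over all tuples of natural numbers (n₁, …, n_l) with n₁ + ⋯ + n_l = n. -/
/-!
Let `P` have simple roots in `K`, and write an upper triangular matrix as `g = [[A, c], [0, a]]`.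
Then `P(g) = [[P(A), Q(A) c], [0, P(a)]]` with `Q = P / (X - a)`, so `P(g) = 0` means that
`P(A) = 0`, `P(a) = 0` and `c ∈ ker Q(A)`. As `a` is a simple root, `ker Q(A)` is a complement of
the generalized eigenspace of `A` at `a`, so its dimension is the number of diagonal entries of `A`
different from `a`. Peeling off columns one by one, the solutions with diagonal `d` number
`q ^ #{i < j | d i ≠ d j}`. The exponent depends only on how often each root occurs in `d`, and
grouping the words `d` by these multiplicities produces the multinomial coefficients. The case
`P = X ^ h - 1` is covered because this polynomial is separable when `h ≠ 0` in `K`.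
-/

open Finset Polynomial
open scoped Matrix

theorem sum_card_fiber_eq_sum_multinomial {ι κ M : Type*} [Fintype ι] [DecidableEq ι] [Fintype κ]
    [DecidableEq κ] [AddCommMonoid M] (F : (ι → ℕ) → M) :
    ∑ d : κ → ι, F (fun x => #{i | d i = x}) =
      ∑ v ∈ piAntidiag univ (Fintype.card κ), Nat.multinomial univ v • F v := by
  -- Apply the linear functional sending `X ^ v` to `F v` to both expansions of `(∑ x, X x) ^ |κ|`.
  let φ : MvPolynomial ι ℕ →ₗ[ℕ] M := (MvPolynomial.basisMonomials ι ℕ).constr ℕ fun v => F v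
  have hφ (v : ι → ℕ) : φ (∏ x, MvPolynomial.X x ^ v x) = F v := by
    have hv := (MvPolynomial.basisMonomials ι ℕ).constr_basis ℕ (fun v => F v)
      (Finsupp.equivFunOnFinite.symm v)
    simp only [MvPolynomial.coe_basisMonomials, MvPolynomial.monomial_eq, map_one, one_mul,
      Finsupp.prod_fintype _ _ fun _ => pow_zero _] at hv
    exact hv
  calc
    _ = φ (∏ _i : κ, ∑ x, MvPolynomial.X x) := by
      rw [prod_univ_sum, Fintype.piFinset_univ, map_sum]
      refine sum_congr rfl fun d _ => ?_
      rw [← prod_fiberwise' univ d, ← hφ]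
      simp only [prod_const]
    _ = _ := by
      simp only [prod_const, card_univ, sum_pow_eq_sum_piAntidiag, ← nsmul_eq_mul, map_sum,
        map_nsmul, hφ]

theorem sum_card_fiber_mul_card_fiber {ι κ : Type*} [Fintype ι] [LinearOrder ι]
    [LocallyFiniteOrderTop ι] [Fintype κ] (d : κ → ι) :
    ∑ x, ∑ y ∈ Ioi x, #{i | d i = x} * #{i | d i = y} = #{p : κ × κ | d p.1 < d p.2} := by
  have hfiber (x : ι) : ∑ y ∈ Ioi x, #{j | d j = y} = #{j | x < d j} := by
    rw [card_eq_sum_card_fiberwise (s := {j | x < d j}) (f := d) (t := Ioi x)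
      (by simp [Set.MapsTo])]
    refine sum_congr rfl fun y hy => congrArg card ?_
    rw [mem_Ioi] at hy
    grind
  calc
    _ = ∑ x, #{i | d i = x} * #{j | x < d j} := by simp only [← mul_sum, hfiber]
    _ = ∑ i, #{j | d i < d j} := by
      simp only [← sum_fiberwise' univ d fun x => #{j | x < d j}, sum_const, smul_eq_mul]
    _ = _ := by simp only [card_filter, Fintype.sum_prod_type]

-- Both sides count the unordered pairs on which `d` differs: the left one lists the two indices
-- by increasing value of `d`, the right one by increasing position.
theorem card_apply_lt_apply_eq_sum_card_lt_and_ne {ι κ : Type*} [LinearOrder ι] [Fintype κ]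
    [LinearOrder κ] (d : κ → ι) :
    #{p : κ × κ | d p.1 < d p.2} = ∑ j, #{i | i < j ∧ d i ≠ d j} := by
  calc
    _ = #{p : κ × κ | p.1 < p.2 ∧ d p.1 ≠ d p.2} := by
      refine card_nbij' (fun p => (min p.1 p.2, max p.1 p.2))
        (fun p => if d p.1 < d p.2 then p else p.swap) ?_ ?_ ?_ ?_ <;>
        grind [Set.MapsTo, Set.LeftInvOn]
    _ = _ := by simp only [card_filter, Fintype.sum_prod_type_right]

theorem isCompl_ker_aeval_maxGenEigenspace {K V : Type*} [Field K] [AddCommGroup V] [Module K V]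
    {f : Module.End K V} {q : K[X]} {a : K} (hqa : ¬ q.IsRoot a)
    (hf : aeval f (q * (X - C a)) = 0) :
    IsCompl (LinearMap.ker (aeval f q)) (f.maxGenEigenspace a) := by
  have hcop : IsCoprime q (X - C a) :=
    ((irreducible_X_sub_C a).coprime_iff_not_dvd.2 (mt dvd_iff_isRoot.1 hqa)).symm
  have hX : aeval f (X - C a) = f - a • 1 := by simp [Algebra.algebraMap_eq_smul_one]
  constructor
  · rw [Submodule.disjoint_def]
    intro v hv hva
    obtain ⟨k, hk⟩ := (f.mem_maxGenEigenspace a v).1 hva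
    rw [← hX, ← map_pow] at hk
    exact Submodule.disjoint_def.1 (disjoint_ker_aeval_of_isCoprime f hcop.pow_right) v hv hk
  · rw [codisjoint_iff_le_sup]
    calc
      ⊤ = LinearMap.ker (aeval f q) ⊔ f.eigenspace a := by
        rw [Module.End.eigenspace_def, ← hX, sup_ker_aeval_eq_ker_aeval_mul_of_coprime f hcop, hf,
          LinearMap.ker_zero]
      _ ≤ LinearMap.ker (aeval f q) ⊔ f.maxGenEigenspace a := by
        gcongr
        exact Module.End.eigenspace_le_maxGenEigenspace

theorem rootMultiplicity_charpoly_of_isUpperTriangular {R m : Type*} [CommRing R] [IsDomain R]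
    [DecidableEq R] [Fintype m] [LinearOrder m] {A : Matrix m m R} (hA : A.IsUpperTriangular)
    (a : R) :
    A.charpoly.rootMultiplicity a = #{i | A i i = a} := by
  rw [Matrix.charpoly_of_isUpperTriangular A hA, ← count_roots,
    roots_prod _ _ (prod_ne_zero_iff.2 fun i _ => X_sub_C_ne_zero _)]
  simp only [roots_X_sub_C, Multiset.bind_singleton, Multiset.count_map, eq_comm (a := a)]
  rfl

theorem isRoot_diag_of_aeval_eq_zero {K m : Type*} [Field K] [Fintype m] [LinearOrder m]
    {A : Matrix m m K} (hA : A.IsUpperTriangular) {P : K[X]} (hP : aeval A P = 0) (i : m) :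
    P.IsRoot (A i i) := by
  have : Nonempty m := ⟨i⟩
  have hspec : A i i ∈ spectrum K A := by
    rw [Matrix.mem_spectrum_iff_isRoot_charpoly, Matrix.charpoly_of_isUpperTriangular A hA,
      isRoot_prod]
    exact ⟨i, mem_univ i, root_X_sub_C.2 rfl⟩
  have := spectrum.subset_polynomial_aeval A P ⟨_, hspec, rfl⟩
  rwa [hP, spectrum.zero_eq] at this

/-- The block matrix with diagonal blocks `A` and `a`, last column `c` above `a`, and zeros to the
left of `a`. Peeling off the last row and column of an upper triangular matrix puts it in this
form, which is what the inductions on the size of the matrix use. -/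
def bordered {R : Type*} [Zero R] {n : ℕ} (A : Matrix (Fin n) (Fin n) R) (c : Fin n → R) (a : R) :
    Matrix (Fin (n + 1)) (Fin (n + 1)) R :=
  Matrix.of (Fin.snoc (α := fun _ => Fin (n + 1) → R)
    (fun i => Fin.snoc (α := fun _ => R) (A i) (c i)) (Fin.snoc (α := fun _ => R) 0 a))

section BorderedZero

variable {R : Type*} [Zero R] {n : ℕ} {A A' : Matrix (Fin n) (Fin n) R} {c c' : Fin n → R}
  {a a' : R}

@[simp]
theorem bordered_castSucc_castSucc (i j : Fin n) :
    bordered A c a i.castSucc j.castSucc = A i j := by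
  simp [bordered]

@[simp]
theorem bordered_castSucc_last (i : Fin n) : bordered A c a i.castSucc (Fin.last n) = c i := by
  simp [bordered]

@[simp]
theorem bordered_last_castSucc (j : Fin n) : bordered A c a (Fin.last n) j.castSucc = 0 := by
  simp [bordered]

@[simp]
theorem bordered_last_last : bordered A c a (Fin.last n) (Fin.last n) = a := by
  simp [bordered]

theorem bordered_inj : bordered A c a = bordered A' c' a' ↔ A = A' ∧ c = c' ∧ a = a' := by
  simp [← Matrix.ext_iff, Fin.forall_fin_succ', funext_iff, forall_and]

theorem bordered_eq_zero_iff : bordered A c a = 0 ↔ A = 0 ∧ c = 0 ∧ a = 0 := by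
  simp [← Matrix.ext_iff, Fin.forall_fin_succ', funext_iff, forall_and]

theorem isUpperTriangular_bordered_iff :
    (bordered A c a).IsUpperTriangular ↔ A.IsUpperTriangular := by
  simp [Matrix.BlockTriangular, Fin.forall_fin_succ', Fin.castSucc_lt_last, Fin.le_last,
    not_lt_of_ge]

theorem diag_bordered : (bordered A c a).diag = Fin.snoc (α := fun _ => R) A.diag a := by
  ext i
  induction i using Fin.lastCases <;> simp

theorem exists_eq_bordered {g : Matrix (Fin (n + 1)) (Fin (n + 1)) R} (hg : g.IsUpperTriangular) :
    ∃ A c a, g = bordered A c a := by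
  refine ⟨g.submatrix Fin.castSucc Fin.castSucc, fun i => g i.castSucc (Fin.last n),
    g (Fin.last n) (Fin.last n), ?_⟩
  have hlast (i : Fin n) : g (Fin.last n) i.castSucc = 0 := hg (Fin.castSucc_lt_last i)
  simp [← Matrix.ext_iff, Fin.forall_fin_succ', hlast]

end BorderedZero

section BorderedSemiring

variable {R : Type*} [CommSemiring R] {n : ℕ} (A A' : Matrix (Fin n) (Fin n) R)
  (c c' : Fin n → R) (a a' : R)

theorem bordered_add_bordered :
    bordered A c a + bordered A' c' a' = bordered (A + A') (c + c') (a + a') := by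
  simp [← Matrix.ext_iff, Fin.forall_fin_succ']

theorem bordered_mul_bordered :
    bordered A c a * bordered A' c' a' = bordered (A * A') (A *ᵥ c' + a' • c) (a * a') := by
  simp [← Matrix.ext_iff, Fin.forall_fin_succ', Matrix.mul_apply, Fin.sum_univ_castSucc,
    Matrix.mulVec, dotProduct, mul_comm a']

theorem algebraMap_eq_bordered :
    algebraMap R (Matrix (Fin (n + 1)) (Fin (n + 1)) R) a = bordered (algebraMap R _ a) 0 a := by
  simp [← Matrix.ext_iff, Fin.forall_fin_succ', Matrix.algebraMap_matrix_apply,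
    Fin.castSucc_ne_last, (Fin.castSucc_ne_last _).symm]

theorem exists_aeval_bordered (P : R[X]) :
    ∃ u, aeval (bordered A c a) P = bordered (aeval A P) u (P.eval a) := by
  induction P using Polynomial.induction_on' with
  | add p q hp hq =>
    obtain ⟨u, hu⟩ := hp
    obtain ⟨v, hv⟩ := hq
    exact ⟨u + v, by simp only [map_add, hu, hv, bordered_add_bordered, eval_add]⟩
  | monomial k x =>
    induction k with
    | zero => exact ⟨0, by simp [algebraMap_eq_bordered]⟩
    | succ k ih =>
      obtain ⟨u, hu⟩ := ih
      exact ⟨aeval A (monomial k x) *ᵥ c + a • u, by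
        rw [← monomial_mul_X, map_mul, hu, aeval_X, bordered_mul_bordered, map_mul, aeval_X,
          eval_mul_X]⟩

end BorderedSemiring

section BorderedRing

variable {R : Type*} [CommRing R] {n : ℕ} (A : Matrix (Fin n) (Fin n) R) (c : Fin n → R) (a : R)

theorem aeval_bordered (P : R[X]) :
    aeval (bordered A c a) P =
      bordered (aeval A P) (aeval A (P /ₘ (X - C a)) *ᵥ c) (P.eval a) := by
  set Q := P /ₘ (X - C a)
  have hP : P = Q * (X - C a) + C (P.eval a) := by
    rw [← modByMonic_X_sub_C_eq_C_eval, add_comm, mul_comm, modByMonic_add_div]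
  have hX : aeval (bordered A c a) (X - C a) = bordered (aeval A (X - C a)) c 0 := by
    simp [sub_eq_iff_eq_add, algebraMap_eq_bordered, bordered_add_bordered]
  obtain ⟨u, hu⟩ := exists_aeval_bordered A c a Q
  calc
    aeval (bordered A c a) P =
        bordered (aeval A Q) u (Q.eval a) * bordered (aeval A (X - C a)) c 0 +
          bordered (aeval A (C (P.eval a))) 0 (P.eval a) := by
      rw [← hu, ← hX, aeval_C, ← algebraMap_eq_bordered, ← map_mul, 
        ← aeval_C (bordered A c a), ← map_add, ← hP]
    _ = bordered (aeval A (Q * (X - C a) + C (P.eval a))) (aeval A Q *ᵥ c) (P.eval a) := by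
      rw [bordered_mul_bordered, bordered_add_bordered, map_add, map_mul]
      simp only [zero_smul, add_zero, mul_zero, zero_add]
    _ = bordered (aeval A P) (aeval A Q *ᵥ c) (P.eval a) := by rw [← hP]

theorem aeval_bordered_eq_zero_iff {P : R[X]} :
    aeval (bordered A c a) P = 0 ↔
      aeval A P = 0 ∧ aeval A (P /ₘ (X - C a)) *ᵥ c = 0 ∧ P.IsRoot a := by
  rw [aeval_bordered, bordered_eq_zero_iff, IsRoot.def]

end BorderedRing

theorem finrank_ker_aeval_divByMonic {K m : Type*} [Field K] [DecidableEq K] [Fintype m]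
    [LinearOrder m] {A : Matrix m m K} (hA : A.IsUpperTriangular) {P : K[X]} (hP : aeval A P = 0)
    {a : K} (ha : P.rootMultiplicity a = 1) :
    Module.finrank K (LinearMap.ker (aeval A (P /ₘ (X - C a))).mulVecLin) = #{i | A i i ≠ a} := by
  obtain ⟨hP₀, hroot⟩ : P ≠ 0 ∧ P.IsRoot a := rootMultiplicity_pos'.1 (ha ▸ one_pos)
  have hQ : ¬ (P /ₘ (X - C a)).IsRoot a := by
    simpa [ha] using eval_divByMonic_pow_rootMultiplicity_ne_zero a hP₀
  let f : Module.End K (m → K) := Matrix.toLinAlgEquiv' A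
  have hf (p : K[X]) : aeval f p = (aeval A p).mulVecLin :=
    aeval_algHom_apply (Matrix.toLinAlgEquiv' : Matrix m m K ≃ₐ[K] _) A p
  have hcompl : IsCompl (LinearMap.ker (aeval f (P /ₘ (X - C a)))) (f.maxGenEigenspace a) :=
    isCompl_ker_aeval_maxGenEigenspace hQ <| by
      rw [mul_comm, mul_divByMonic_eq_iff_isRoot.2 hroot, hf, hP, Matrix.mulVecLin_zero]
  have hgen : Module.finrank K (f.maxGenEigenspace a) = #{i | A i i = a} := by
    rw [LinearMap.finrank_maxGenEigenspace_eq,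
      ← rootMultiplicity_charpoly_of_isUpperTriangular hA,
      ← Matrix.charpoly_toLin']
    rfl
  have hdim := Submodule.finrank_add_eq_of_isCompl hcompl
  rw [hgen, hf, Module.finrank_fintype_fun_eq_card, ← card_univ,
    ← card_filter_add_card_filter_not (s := univ) (fun i => A i i = a), add_comm] at hdim
  exact Nat.add_left_cancel hdim

/-- The upper triangular matrices annihilated by `P` whose diagonal is `d`. -/
abbrev TriangularRoot {K : Type*} [Field K] {n : ℕ} (P : K[X]) (d : Fin n → K) : Type _ :=
  {g : Matrix (Fin n) (Fin n) K // aeval g P = 0 ∧ g.IsUpperTriangular ∧ g.diag = d}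

section Counting

variable {K : Type*} [Field K] [Finite K] {n : ℕ} {P : K[X]}

theorem card_triangularRoot_snoc [DecidableEq K] (d : Fin n → K) {a : K}
    (ha : P.rootMultiplicity a = 1) :
    Nat.card (TriangularRoot P (Fin.snoc (α := fun _ => K) d a)) =
      Nat.card (TriangularRoot P d) * Nat.card K ^ #{i | d i ≠ a} := by
  have hroot : P.IsRoot a := (rootMultiplicity_pos'.1 (ha ▸ one_pos)).2
  let border : (Σ g : TriangularRoot P d,
      LinearMap.ker (aeval g.1 (P /ₘ (X - C a))).mulVecLin) →
        TriangularRoot P (Fin.snoc (α := fun _ => K) d a) :=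
    fun x => ⟨bordered x.1 x.2 a, (aeval_bordered_eq_zero_iff _ _ _).2 ⟨x.1.2.1, x.2.2, hroot⟩,
      isUpperTriangular_bordered_iff.2 x.1.2.2.1, by rw [diag_bordered, x.1.2.2.2]⟩
  have hinj : border.Injective := by
    rintro ⟨⟨A, hA⟩, c, hc⟩ ⟨⟨A', hA'⟩, c', hc'⟩ hxy
    obtain ⟨rfl, rfl, -⟩ := bordered_inj.1 (congrArg Subtype.val hxy)
    rfl
  have hsurj : border.Surjective := by
    rintro ⟨g, hg, htri, hdiag⟩
    obtain ⟨A, c, b, rfl⟩ := exists_eq_bordered htri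
    rw [diag_bordered, Fin.snoc_inj] at hdiag
    obtain ⟨rfl, rfl⟩ := hdiag
    obtain ⟨hA, hc, -⟩ := (aeval_bordered_eq_zero_iff A c b).1 hg
    exact ⟨⟨⟨A, hA, isUpperTriangular_bordered_iff.1 htri, rfl⟩, c, hc⟩, rfl⟩
  have hker (g : TriangularRoot P d) :
      Nat.card (LinearMap.ker (aeval g.1 (P /ₘ (X - C a))).mulVecLin) =
        Nat.card K ^ #{i | d i ≠ a} := by
    rw [Module.natCard_eq_pow_finrank (K := K), finrank_ker_aeval_divByMonic g.2.2.1 g.2.1 ha]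
    simp only [← congrFun g.2.2.2, Matrix.diag_apply]
  have := Fintype.ofFinite (TriangularRoot P d)
  rw [← Nat.card_congr (Equiv.ofBijective border ⟨hinj, hsurj⟩), Nat.card_sigma]
  simp only [hker, sum_const, card_univ, smul_eq_mul, Nat.card_eq_fintype_card]

theorem card_triangularRoot [DecidableEq K] {d : Fin n → K}
    (hd : ∀ i, P.rootMultiplicity (d i) = 1) :
    Nat.card (TriangularRoot P d) = Nat.card K ^ ∑ j, #{i | i < j ∧ d i ≠ d j} := by
  induction n with
  | zero =>
    have : Unique (TriangularRoot P d) :=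
      { default := ⟨0, Subsingleton.elim _ _, fun i => i.elim0, Subsingleton.elim _ _⟩
        uniq := fun _ => Subsingleton.elim _ _ }
    simp
  | succ n ih =>
    have hsum : ∑ j, #{i | i < j ∧ d i ≠ d j} =
        ∑ j : Fin n, #{i : Fin n | i < j ∧ d i.castSucc ≠ d j.castSucc} +
          #{i : Fin n | d i.castSucc ≠ d (Fin.last n)} := by
      simp only [card_filter, Fin.sum_univ_castSucc, Fin.castSucc_lt_castSucc_iff,
        Fin.castSucc_lt_last, (Fin.castSucc_lt_last _).not_gt, lt_irrefl, true_and, false_and,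
        if_false, add_zero]
    calc
      _ = Nat.card (TriangularRoot P (Fin.init d)) *
          Nat.card K ^ #{i | Fin.init d i ≠ d (Fin.last n)} := by
        rw [← card_triangularRoot_snoc _ (hd _), Fin.snoc_init_self]
      _ = _ := by
        rw [ih (d := Fin.init d) fun i => hd i.castSucc, ← pow_add, hsum]
        rfl

theorem card_isUpperTriangular_aeval_eq_zero {ι : Type*} [Fintype ι] (r : ι ≃ {a // P.IsRoot a}) :
    Nat.card {g : Matrix (Fin n) (Fin n) K // aeval g P = 0 ∧ g.IsUpperTriangular} =
      ∑ d : Fin n → ι, Nat.card (TriangularRoot P fun i => (r (d i) : K)) := by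
  rw [← Nat.card_sigma]
  let forgetDiag : (Σ d : Fin n → ι, TriangularRoot P fun i => (r (d i) : K)) →
      {g : Matrix (Fin n) (Fin n) K // aeval g P = 0 ∧ g.IsUpperTriangular} :=
    fun x => ⟨x.2, x.2.2.1, x.2.2.2.1⟩
  refine (Nat.card_congr (Equiv.ofBijective forgetDiag ⟨?_, ?_⟩)).symm
  · rintro ⟨d, g, hg⟩ ⟨d', g', hg'⟩ h
    obtain rfl : g = g' := congrArg Subtype.val h
    obtain rfl : d = d' := funext fun i =>
      r.injective (Subtype.ext (congrFun (hg.2.2.symm.trans hg'.2.2) i))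
    rfl
  · rintro ⟨g, hg, htri⟩
    exact ⟨⟨fun i => r.symm ⟨g i i, isRoot_diag_of_aeval_eq_zero htri hg i⟩, g, hg, htri,
      by ext; simp⟩, rfl⟩

end Counting

theorem stmt_11_general {K : Type*} [Field K] [Finite K] (n l : ℕ) {P : K[X]} (hP : P ≠ 0)
    (hroots : P.roots.Nodup) (hl : P.roots.card = l) :
    Nat.card {g : Matrix (Fin n) (Fin n) K //
        aeval g P = 0 ∧ ∀ i j : Fin n, j < i → g i j = 0} =
      ∑ v ∈ Finset.Nat.antidiagonalTuple l n, Nat.multinomial univ v *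
        Nat.card K ^ ∑ i : Fin l, ∑ j ∈ Ioi i, v i * v j := by
  classical
  have hcard : Nat.card {a // P.IsRoot a} = l := by
    simp only [← mem_roots hP, ← Multiset.mem_toFinset, Nat.card_eq_fintype_card,
      Fintype.card_coe]
    rw [Multiset.toFinset_card_of_nodup hroots, hl]
  have hsimple {a : K} (ha : P.IsRoot a) : P.rootMultiplicity a = 1 := by
    rw [← count_roots, Multiset.count_eq_one_of_mem hroots ((mem_roots hP).2 ha)]
  let r : Fin l ≃ {a // P.IsRoot a} := (Finite.equivFinOfCardEq hcard).symm
  calc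
    _ = ∑ d : Fin n → Fin l, Nat.card (TriangularRoot P fun i => (r (d i) : K)) :=
      card_isUpperTriangular_aeval_eq_zero r
    _ = ∑ d : Fin n → Fin l, Nat.card K ^ ∑ j, #{i | i < j ∧ d i ≠ d j} := by
      simp only [card_triangularRoot fun _ => hsimple (r _).2, ne_eq,
        Subtype.val_inj, r.apply_eq_iff_eq]
    _ = _ := by
      simp only [← card_apply_lt_apply_eq_sum_card_lt_and_ne, ← sum_card_fiber_mul_card_fiber]
      rw [sum_card_fiber_eq_sum_multinomial fun v : Fin l → ℕ =>
        Nat.card K ^ ∑ x, ∑ y ∈ Ioi x, v x * v y]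
      simp only [Fintype.card_fin, piAntidiag_univ_fin_eq_antidiagonalTuple, smul_eq_mul]

/-- Słowik's theorem: over a finite field `K` with `q` elements and `char K ∤ h`, if `l` is
the number of `h`-th roots of unity in `K`, then the number of `n×n` upper triangular
matrices `g` with `g^h = 1` equals
`∑_{n₁+⋯+n_l = n} (n! / (n₁!⋯n_l!)) · q^(∑_{i<j} n_i n_j)`. -/
theorem stmt_11 {K : Type*} [Field K] [Fintype K] [DecidableEq K] (q h n l : ℕ)
    (hq : Fintype.card K = q) (hh : 1 ≤ h) (hchar : (h : K) ≠ 0) (hn : 1 ≤ n)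
    (hl : (Finset.univ.filter (fun d : K => d ^ h = 1)).card = l) :
    Nat.card {g : Matrix (Fin n) (Fin n) K //
        g ^ h = 1 ∧ ∀ i j : Fin n, j < i → g i j = 0}
      = ∑ v ∈ Finset.Nat.antidiagonalTuple l n,
          Nat.multinomial Finset.univ v *
            q ^ (∑ i : Fin l, ∑ j ∈ Finset.Ioi i, v i * v j) := by
  have hsep : (X ^ h - C 1 : K[X]).Separable := separable_X_pow_sub_C 1 hchar one_ne_zero
  have hroots : (X ^ h - C 1 : K[X]).roots.card = l := by
    rw [← hl, ← Multiset.toFinset_card_of_nodup (nodup_roots hsep)]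
    congr 1
    ext d
    rw [Multiset.mem_toFinset, mem_roots hsep.ne_zero]
    simp [sub_eq_zero]
  simpa [sub_eq_zero, hq] using stmt_11_general n l hsep.ne_zero (nodup_roots hsep) hroots
end

section
/- Let K be a finite field with q elements whose characteristic divides neither k nor k+1 (k ≥ 1), and let s be the number of elements x ∈ K with x^(k+1) = x. Let r ≥ 1 and m₁, …, m_r be natural numbers, and let X be the r-branched star poset consisting of a minimum element x₀ together with r chains C₁, …, C_r, where C_t = {x₀ < z_{t,1} < z_{t,2} < ⋯ < z_{t,m_t}}, any two elements lying in distinct chains (other than x₀) being incomparable (so X_i ∩ X_j = {x₀} for i ≠ j). Then the number of elements f of the incidence algebra I(X, K) satisfying f^(k+1) = f equals N(m₁+1) · Π_{t=2}^{r} P(m_t), where N(m₁+1) is the number of (m₁+1)×(m₁+1) upper triangular matrices A over K with A^(k+1) = A, and for each m, P(m) = Σ_{(c₁,…,c_s)} (m! / (c₁!⋯c_s!)) · q^(Σ_{1 ≤ i < j ≤ s} c_i·c_j) · q^(c₂ + c₃ + ⋯ + c_s), the sum ranging over all tuples of natural numbers (c₁, …, c_s) with c₁ + ⋯ + c_s =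 m. -/
/-!
If `f` is `(k + 1)`-potent with diagonal `d`, let `D` be the diagonal element with diagonal `d` and
let `S = ∑ i ≤ k, D ^ i * f ^ (k - i)`. Then `D * S - S * f = D - f`, so `S - 1` intertwines `f` and
`D`. Its diagonal entries `(k + 1) d ^ k - 1` are `-1` or `k`, hence it is a unit and `f` is
conjugate to `D`. By orbit–stabilizer the number of potent elements with diagonal `d` is then
`q ^ discordance d`, where the discordance is the number of pairs `x < y` with `d x ≠ d y`; so we
are counting colourings of the poset by the `s` solutions of `a ^ (k + 1) = a`, with weights.

On a star the discordance is a sum over the branches once the colour of `x₀` is fixed, and by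
symmetry the weight of a branch does not depend on that colour. One branch together with `x₀` is a
chain, whose incidence algebra is the algebra of upper triangular matrices. On the other branches
the weight depends only on how often each colour is used, which gives the multinomial sums.
-/

section Conjugacy

open Finset

lemma mul_geom_sum₂_sub_geom_sum₂_mul {A : Type*} [Ring A] (a b : A) (n : ℕ) :
    a * (∑ i ∈ range n, a ^ i * b ^ (n - 1 - i)) - (∑ i ∈ range n, a ^ i * b ^ (n - 1 - i)) * b =
      a ^ n - b ^ n := by
  have telescope := sum_range_sub (fun i ↦ a ^ i * b ^ (n - i)) n
  simp only [Nat.sub_self, Nat.sub_zero, pow_zero, mul_one, one_mul] at telescope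
  rw [← telescope, mul_sum, sum_mul, ← sum_sub_distrib]
  refine sum_congr rfl fun i hi ↦ ?_
  have hi : n - i = n - 1 - i + 1 := by grind
  have hi' : n - (i + 1) = n - 1 - i := by lia
  rw [hi, hi', pow_succ', pow_succ, mul_assoc, mul_assoc]

lemma semiconjBy_geom_sum₂_sub_one {A : Type*} [Ring A] {a b : A} {k : ℕ}
    (ha : a ^ (k + 1) = a) (hb : b ^ (k + 1) = b) :
    SemiconjBy (∑ i ∈ range (k + 1), a ^ i * b ^ (k - i) - 1) b a := by
  have h := mul_geom_sum₂_sub_geom_sum₂_mul a b (k + 1)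
  rw [ha, hb, Nat.add_sub_cancel, sub_eq_sub_iff_sub_eq_sub] at h
  rw [SemiconjBy, sub_mul, mul_sub, one_mul, mul_one, h]

lemma succ_mul_pow_sub_one_ne_zero {K : Type*} [Field K] {k : ℕ} (hk : (k : K) ≠ 0) {x : K}
    (hx : x ^ (k + 1) = x) : (k + 1 : K) * x ^ k - 1 ≠ 0 := by
  obtain rfl | hx₀ := eq_or_ne x 0
  · have : k ≠ 0 := by rintro rfl; simp at hk
    simp [this]
  · have hxk : x ^ k = 1 := mul_right_cancel₀ hx₀ (by rw [← pow_succ, hx, one_mul])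
    simpa [hxk] using hk

open MulAction ConjAct in
lemma mem_orbit_units_iff_isConj {M : Type*} [Monoid M] {a b : M} :
    b ∈ orbit (ConjAct Mˣ) a ↔ IsConj a b := by
  constructor
  · rintro ⟨g, rfl⟩
    refine ⟨ofConjAct g, ?_⟩
    simp [SemiconjBy, units_smul_def, mul_assoc]
  · rintro ⟨u, hu⟩
    exact ⟨toConjAct u, by simp [units_smul_def, hu.eq, mul_assoc]⟩

open MulAction ConjAct in
lemma card_isConj_mul_card_commute {M : Type*} [Monoid M] (a : M) :
    Nat.card {b : M // IsConj a b} * Nat.card {u : Mˣ // Commute (u : M) a} = Nat.card Mˣ := by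
  have hconj : Nat.card (orbit (ConjAct Mˣ) a) = Nat.card {b : M // IsConj a b} :=
    Nat.card_congr (Equiv.subtypeEquivRight fun _ ↦ mem_orbit_units_iff_isConj)
  have hcomm : Nat.card (stabilizer (ConjAct Mˣ) a) = Nat.card {u : Mˣ // Commute (u : M) a} :=
    Nat.card_congr <| ofConjAct.toEquiv.subtypeEquiv fun g ↦ by
      rw [mem_stabilizer_iff, units_smul_def, Units.mul_inv_eq_iff_eq_mul]
      rfl
  rw [← hconj, ← hcomm, ← Nat.card_prod, Nat.card_congr (orbitProdStabilizerEquivGroup _ a)]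
  rfl

end Conjugacy

section Diagonal

variable {R X : Type*} [Semiring R] [PartialOrder X] [LocallyFiniteOrder X] [DecidableEq X]

/-- The restriction of an element of the incidence algebra to the diagonal of `X × X`, as a ring
homomorphism to the product of copies of `R`. -/
def incidenceDiag : IncidenceAlgebra R X →+* (X → R) where
  toFun f x := f x x
  map_one' := by ext; simp
  map_mul' f g := by ext; simp
  map_zero' := rfl
  map_add' _ _ := rfl

@[simp]
lemma incidenceDiag_apply (f : IncidenceAlgebra R X) (x : X) : incidenceDiag f x = f x x := rfl

/-- The inclusion of the diagonal elements into the incidence algebra, a section of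
`incidenceDiag`. -/
def incidenceDiagonal : (X → R) →+* IncidenceAlgebra R X where
  toFun d := ⟨fun x y ↦ if x = y then d x else 0, fun _ _ h ↦ if_neg fun e ↦ h e.le⟩
  map_one' := by ext; simp
  map_mul' c d := by
    ext x y hxy
    simp only [IncidenceAlgebra.coe_mk, IncidenceAlgebra.mul_apply, ite_mul, zero_mul]
    rw [Finset.sum_ite_eq, if_pos (Finset.left_mem_Icc.2 hxy)]
    split_ifs <;> simp [*]
  map_zero' := by ext; simp
  map_add' c d := by ext x y; by_cases h : x = y <;> simp [h]

lemma incidenceDiagonal_apply (d : X → R) (x y : X) :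
    incidenceDiagonal d x y = if x = y then d x else 0 := rfl

@[simp]
lemma incidenceDiag_incidenceDiagonal (d : X → R) :
    incidenceDiag (incidenceDiagonal d) = d := by
  ext; simp [incidenceDiagonal_apply]

lemma incidenceDiagonal_mul_apply (d : X → R) (f : IncidenceAlgebra R X) (x y : X) :
    (incidenceDiagonal d * f) x y = d x * f x y := by
  by_cases h : x ≤ y <;>
    simp [incidenceDiagonal_apply, h, IncidenceAlgebra.apply_eq_zero_of_not_le]

lemma mul_incidenceDiagonal_apply (d : X → R) (f : IncidenceAlgebra R X) (x y : X) :
    (f * incidenceDiagonal d) x y = f x y * d y := by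
  by_cases h : x ≤ y <;>
    simp [incidenceDiagonal_apply, h, IncidenceAlgebra.apply_eq_zero_of_not_le]

end Diagonal

lemma commute_incidenceDiagonal_iff {R X : Type*} [CommRing R] [IsDomain R] [PartialOrder X]
    [LocallyFiniteOrder X] [DecidableEq X] {f : IncidenceAlgebra R X} {d : X → R} :
    Commute f (incidenceDiagonal d) ↔ ∀ x y, d x ≠ d y → f x y = 0 := by
  rw [commute_iff_eq, ← IncidenceAlgebra.coe_inj]
  simp only [funext_iff, incidenceDiagonal_mul_apply, mul_incidenceDiagonal_apply]
  refine forall₂_congr fun x y ↦ ?_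
  rw [mul_comm, mul_eq_mul_right_iff, eq_comm, or_iff_not_imp_left]

section Units

lemma isLeftRegular_of_apply_self_ne_zero {R X : Type*} [Ring R] [NoZeroDivisors R]
    [PartialOrder X] [LocallyFiniteOrder X] [WellFoundedGT X]
    {f : IncidenceAlgebra R X} (hf : ∀ x, f x x ≠ 0) : IsLeftRegular f := by
  classical
  suffices ∀ g, f * g = 0 → g = 0 from fun g h hgh ↦
    sub_eq_zero.1 <| this _ <| by rw [mul_sub, sub_eq_zero]; exact hgh
  intro g hfg
  ext x y hxy
  induction x using WellFoundedGT.induction with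
  | ind x ih =>
    have hxy_entry : (f * g) x y = f x x * g x y := by
      rw [IncidenceAlgebra.mul_apply]
      refine Finset.sum_eq_single_of_mem x (Finset.left_mem_Icc.2 hxy) fun t ht htx ↦ ?_
      obtain ⟨hxt, hty⟩ := Finset.mem_Icc.1 ht
      rw [ih t (hxt.lt_of_ne' htx) hty, IncidenceAlgebra.zero_apply, mul_zero]
    simpa [hfg, hf x] using hxy_entry

variable {K X : Type*} [Field K] [Finite K] [Finite X] [PartialOrder X] [LocallyFiniteOrder X]

instance : Finite (IncidenceAlgebra K X) := DFunLike.finite _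

variable [DecidableEq X]

lemma isUnit_incidenceAlgebra_iff {f : IncidenceAlgebra K X} : IsUnit f ↔ ∀ x, f x x ≠ 0 :=
  ⟨fun hf x ↦ (Pi.isUnit_iff.1 (hf.map incidenceDiag) x).ne_zero,
    fun hf ↦ (isLeftRegular_of_apply_self_ne_zero hf).isUnit_of_finite⟩

lemma isConj_incidenceDiagonal_iff {k : ℕ} (hk : (k : K) ≠ 0) {d : X → K} (hd : d ^ (k + 1) = d)
    {f : IncidenceAlgebra K X} :
    IsConj (incidenceDiagonal d) f ↔ f ^ (k + 1) = f ∧ incidenceDiag f = d := by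
  have hD : incidenceDiagonal d ^ (k + 1) = incidenceDiagonal d := by rw [← map_pow, hd]
  constructor
  · intro h
    constructor
    · obtain ⟨u, hu⟩ := h
      have hpow := (hu.pow_right (k + 1)).eq
      rw [hD, hu.eq] at hpow
      exact (u.mul_left_inj.1 hpow).symm
    · have hdiag := incidenceDiag.toMonoidHom.map_isConj h
      rw [isConj_iff_eq] at hdiag
      simpa using hdiag.symm
  · rintro ⟨hf, rfl⟩
    refine IsConj.symm ⟨IsUnit.unit (isUnit_incidenceAlgebra_iff.2 fun x ↦ ?_),
      semiconjBy_geom_sum₂_sub_one hD hf⟩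
    have hdiag := RingHom.map_geom_sum₂ (incidenceDiagonal (incidenceDiag f)) f (k + 1)
      incidenceDiag
    rw [incidenceDiag_incidenceDiagonal, geom_sum₂_self, Nat.add_sub_cancel] at hdiag
    rw [IncidenceAlgebra.sub_apply, ← incidenceDiag_apply, hdiag]
    simpa using succ_mul_pow_sub_one_ne_zero hk (congrFun hd x)

/-- A unit commuting with `incidenceDiagonal d` is determined by its invertible diagonal entries
and its entries at the pairs `x < y` with `d x = d y`, all of which are arbitrary. -/
noncomputable def unitsCommuteEquiv (d : X → K) :
    {u : (IncidenceAlgebra K X)ˣ // Commute (u : IncidenceAlgebra K X) (incidenceDiagonal d)} ≃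
      (X → Kˣ) × ({p : X × X // p.1 < p.2 ∧ d p.1 = d p.2} → K) := by
  classical exact
  { toFun u := (fun x ↦ Units.mk0 (u.1.1 x x) (isUnit_incidenceAlgebra_iff.1 u.1.isUnit x),
      fun p ↦ u.1.1 p.1.1 p.1.2)
    invFun w :=
      let f : IncidenceAlgebra K X :=
        ⟨fun x y ↦ if x = y then w.1 x else
          if h : x < y ∧ d x = d y then w.2 ⟨(x, y), h⟩ else 0, fun x y h ↦ by
            rw [if_neg fun e ↦ h e.le, dif_neg fun e ↦ h e.1.le]⟩
      ⟨((isUnit_incidenceAlgebra_iff (f := f)).2 fun x ↦ by simp [f]).unit,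
        commute_incidenceDiagonal_iff.2 fun x y h ↦ by
          have hxy : x ≠ y := by rintro rfl; exact h rfl
          simp [f, h, hxy]⟩
    left_inv u := by
      ext x y hxy
      obtain rfl | hlt := hxy.eq_or_lt
      · simp
      · by_cases h : d x = d y
        · simp [hlt, hlt.ne, h]
        · simp [hlt.ne, h, commute_incidenceDiagonal_iff.1 u.2 x y h]
    right_inv w := by
      ext1
      · ext x; simp
      · ext ⟨⟨x, y⟩, hlt, h⟩
        simp only [IsUnit.unit_spec, IncidenceAlgebra.coe_mk]
        rw [if_neg hlt.ne, dif_pos ⟨hlt, h⟩] }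

lemma card_units_commute_incidenceDiagonal (d : X → K) :
    Nat.card {u : (IncidenceAlgebra K X)ˣ //
        Commute (u : IncidenceAlgebra K X) (incidenceDiagonal d)} =
      Nat.card Kˣ ^ Nat.card X *
        Nat.card K ^ Nat.card {p : X × X // p.1 < p.2 ∧ d p.1 = d p.2} := by
  rw [Nat.card_congr (unitsCommuteEquiv d), Nat.card_prod, Nat.card_fun, Nat.card_fun]

lemma card_units_incidenceAlgebra :
    Nat.card (IncidenceAlgebra K X)ˣ =
      Nat.card Kˣ ^ Nat.card X * Nat.card K ^ Nat.card {p : X × X // p.1 < p.2} := by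
  have h := card_units_commute_incidenceDiagonal (0 : X → K)
  rw [map_zero, Nat.card_congr (Equiv.subtypeUnivEquiv fun _ ↦ Commute.zero_right _)] at h
  simpa using h

end Units

section Discordance

variable {X S : Type*} [Fintype X] [LT X] [DecidableEq S]

open scoped Classical in
/-- The number of strictly comparable pairs of elements of `X` which receive different colours in
the colouring `d`. -/
noncomputable def discordance (d : X → S) : ℕ :=
  Finset.card {p : X × X | p.1 < p.2 ∧ d p.1 ≠ d p.2}

lemma card_concordant_add_discordance (d : X → S) :
    Nat.card {p : X × X // p.1 < p.2 ∧ d p.1 = d p.2} + discordance d =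
      Nat.card {p : X × X // p.1 < p.2} := by
  classical
  simp only [discordance, Nat.card_eq_fintype_card, Fintype.card_subtype, ← Finset.filter_filter]
  exact Finset.card_filter_add_card_filter_not _

lemma discordance_comp_injective {T : Type*} [DecidableEq T] {σ : S → T}
    (hσ : Function.Injective σ) (d : X → S) : discordance (σ ∘ d) = discordance d := by
  classical simp [discordance, hσ.eq_iff]

lemma discordance_comp_orderIso {X Y : Type*} [Fintype X] [Preorder X] [Fintype Y] [Preorder Y]
    (e : X ≃o Y) (d : Y → S) : discordance (d ∘ e) = discordance d := by
  classical
  refine Finset.card_equiv (e.toEquiv.prodCongr e.toEquiv) fun p ↦ ?_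
  simp

/-- The sum of `q ^ discordance d` over all colourings `d : X → S`. -/
noncomputable def colouringSum {R : Type*} [CommSemiring R] (q : R) (X S : Type*) [Fintype X]
    [LT X] [DecidableEq X] [Fintype S] [DecidableEq S] : R :=
  ∑ d : X → S, q ^ discordance d

lemma colouringSum_congr {R X Y S T : Type*} [CommSemiring R] [Fintype X] [Preorder X]
    [DecidableEq X] [Fintype Y] [Preorder Y] [DecidableEq Y] [Fintype S] [DecidableEq S]
    [Fintype T] [DecidableEq T] (q : R) (e : X ≃o Y) (σ : S ≃ T) :
    colouringSum q X S = colouringSum q Y T := by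
  refine Fintype.sum_equiv (e.toEquiv.arrowCongr σ) _ _ fun d ↦ ?_
  have h : e.toEquiv.arrowCongr σ d = σ ∘ d ∘ e.symm := rfl
  rw [h, discordance_comp_injective σ.injective, discordance_comp_orderIso]

end Discordance

section Potent

variable {K X : Type*} [Field K] [Fintype X] [PartialOrder X] [LocallyFiniteOrder X]
  [DecidableEq X] [DecidableEq K]

lemma card_isConj_incidenceDiagonal [Finite K] (d : X → K) :
    Nat.card {f : IncidenceAlgebra K X // IsConj (incidenceDiagonal d) f} =
      Nat.card K ^ discordance d := by
  have h := card_isConj_mul_card_commute (incidenceDiagonal d)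
  rw [card_units_commute_incidenceDiagonal, card_units_incidenceAlgebra,
    ← card_concordant_add_discordance d, pow_add] at h
  refine Nat.eq_of_mul_eq_mul_right ?_ (h.trans (by ring))
  exact mul_pos (pow_pos Nat.card_pos _) (pow_pos Nat.card_pos _)

theorem card_potent_incidenceAlgebra [Fintype K] {k : ℕ} (hk : (k : K) ≠ 0) :
    Nat.card {f : IncidenceAlgebra K X // f ^ (k + 1) = f} =
      colouringSum (Nat.card K) X {a : K // a ^ (k + 1) = a} := by
  let diag (f : {f : IncidenceAlgebra K X // f ^ (k + 1) = f}) (x : X) :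
      {a : K // a ^ (k + 1) = a} :=
    ⟨incidenceDiag f.1 x, by rw [← Pi.pow_apply, ← map_pow, f.2]⟩
  rw [← Nat.card_congr (Equiv.sigmaFiberEquiv diag), Nat.card_sigma]
  refine Finset.sum_congr rfl fun d _ ↦ ?_
  let d' : X → K := Subtype.val ∘ d
  have hd : d' ^ (k + 1) = d' := funext fun x ↦ (d x).2
  rw [← discordance_comp_injective Subtype.val_injective, ← card_isConj_incidenceDiagonal]
  have diag_eq_iff (f) : diag f = d ↔ incidenceDiag f.1 = d' := by
    simp only [funext_iff, Subtype.ext_iff, diag, d', Function.comp_apply]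
  exact Nat.card_congr <|
    ((Equiv.subtypeEquivRight diag_eq_iff).trans
      (Equiv.subtypeSubtypeEquivSubtypeInter _ fun f ↦ incidenceDiag f = d')).trans
      (Equiv.subtypeEquivRight fun _ ↦ (isConj_incidenceDiagonal_iff hk hd).symm)

end Potent

section Branches

variable {R S : Type*} [CommSemiring R] [DecidableEq S]

lemma discordance_withBot {P : Type*} [Fintype P] [Preorder P] (d : WithBot P → S) :
    discordance d =
      Finset.card {x : P | d x ≠ d ⊥} + discordance fun x : P ↦ d x := by
  classical
  have sum_withBot (g : WithBot P → ℕ) : ∑ x, g x = g ⊥ + ∑ x : P, g x := Fintype.sum_option g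
  simp only [discordance, Finset.card_filter, Fintype.sum_prod_type, sum_withBot]
  simp [eq_comm]

variable {ι : Type*} [Fintype ι] {P : ι → Type*} [∀ t, Fintype (P t)] [∀ t, Preorder (P t)]

lemma discordance_sigma (d : (Σ t, P t) → S) :
    discordance d = ∑ t, discordance fun x ↦ d ⟨t, x⟩ := by
  classical
  simp only [discordance, Finset.card_filter, Fintype.sum_prod_type, Fintype.sum_sigma]
  refine Fintype.sum_congr _ _ fun t ↦ Fintype.sum_congr _ _ fun x ↦ ?_
  rw [Fintype.sum_eq_single t fun t' ht ↦ Finset.sum_eq_zero fun y _ ↦ if_neg ?_]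
  · simp
  · rintro ⟨⟨_⟩, -⟩
    exact ht rfl

variable [Fintype S]

/-- The contribution to `colouringSum q (WithBot P) S` of the colourings for which the bottom
element has colour `a`, as a sum over the colourings of `P`. -/
noncomputable def branchSum (q : R) (P : Type*) [Fintype P] [LT P] [DecidableEq P] (a : S) : R :=
  ∑ e : P → S, q ^ (Finset.card {x | e x ≠ a} + discordance e)

lemma branchSum_eq_branchSum (q : R) (P : Type*) [Fintype P] [LT P] [DecidableEq P] (a b : S) :
    branchSum q P a = branchSum q P b := by
  let σ := Equiv.swap a b
  refine Fintype.sum_equiv ((Equiv.refl P).arrowCongr σ) _ _ fun e ↦ ?_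
  have σ_comp : (Equiv.refl P).arrowCongr σ e = σ ∘ e := rfl
  have ne_iff (x : P) : σ (e x) ≠ b ↔ e x ≠ a := by
    rw [← Equiv.swap_apply_left a b, σ.injective.ne_iff]
  simp only [σ_comp, discordance_comp_injective σ.injective, Function.comp_apply, ne_iff]

lemma colouringSum_withBot (q : R) (P : Type*) [Fintype P] [Preorder P] [DecidableEq P] (a : S) :
    colouringSum q (WithBot P) S = Fintype.card S * branchSum q P a := by
  have sum_bot_colour : colouringSum q (WithBot P) S = ∑ b : S, branchSum q P b := by
    let split : (WithBot P → S) ≃ S × (P → S) := Equiv.piOptionEquivProd (β := fun _ ↦ S)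
    simp only [branchSum]
    rw [← Fintype.sum_prod_type']
    exact Fintype.sum_equiv split _ _ fun d ↦ by rw [discordance_withBot]; rfl
  rw [sum_bot_colour, Fintype.sum_congr _ _ fun b ↦ branchSum_eq_branchSum q P b a]
  simp

variable [DecidableEq ι] [∀ t, DecidableEq (P t)]

lemma branchSum_sigma (q : R) (a : S) :
    branchSum q (Σ t, P t) a = ∏ t, branchSum q (P t) a := by
  simp only [branchSum, Finset.prod_univ_sum, Fintype.piFinset_univ]
  refine Fintype.sum_equiv (Equiv.piCurry fun _ _ ↦ S) _ _ fun e ↦ ?_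
  have card_ne : Finset.card {x | e x ≠ a} = ∑ t, Finset.card {x | e ⟨t, x⟩ ≠ a} := by
    simp only [Finset.card_filter, Fintype.sum_sigma]
  rw [discordance_sigma, card_ne, ← Finset.sum_add_distrib, ← Finset.prod_pow_eq_pow_sum]
  rfl

lemma colouringSum_withBot_sigma (q : R) (t₀ : ι) (a : S) :
    colouringSum q (WithBot (Σ t, P t)) S =
      colouringSum q (WithBot (P t₀)) S * ∏ t with t ≠ t₀, branchSum q (P t) a := by
  rw [colouringSum_withBot q _ a, colouringSum_withBot q _ a, branchSum_sigma, mul_assoc,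
    Finset.filter_ne', Finset.mul_prod_erase _ (fun t ↦ branchSum q (P t) a) (Finset.mem_univ t₀)]

end Branches

section Words

/-- The number of occurrences of each letter in the word `e`. -/
def letterCount {α S : Type*} [Fintype α] [DecidableEq S] (e : α → S) (a : S) : ℕ :=
  Finset.card {i | e i = a}

variable {α S : Type*} [Fintype α] [Fintype S]

lemma sum_comp_eq_sum_letterCount_nsmul [DecidableEq S] {M : Type*} [AddCommMonoid M]
    (e : α → S) (g : S → M) : ∑ i, g (e i) = ∑ a, letterCount e a • g a := by
  rw [← Finset.sum_fiberwise Finset.univ e]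
  refine Fintype.sum_congr _ _ fun a ↦ ?_
  rw [letterCount, ← Finset.sum_const]
  exact Finset.sum_congr rfl fun i hi ↦ by rw [(Finset.mem_filter.1 hi).2]

lemma card_filter_comp [DecidableEq S] (e : α → S) (p : S → Prop) [DecidablePred p] :
    Finset.card {i | p (e i)} = ∑ a with p a, letterCount e a := by
  rw [Finset.card_filter, sum_comp_eq_sum_letterCount_nsmul e fun a ↦ if p a then 1 else 0,
    Finset.sum_filter]
  simp

lemma sum_letterCount [DecidableEq S] (e : α → S) : ∑ a, letterCount e a = Fintype.card α := by
  simpa using (sum_comp_eq_sum_letterCount_nsmul e fun _ ↦ (1 : ℕ)).symm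

lemma discordance_eq_sum_letterCount [LinearOrder α] [LinearOrder S] [LocallyFiniteOrderTop S]
    (e : α → S) :
    discordance e = ∑ a, ∑ b ∈ Finset.Ioi a, letterCount e a * letterCount e b := by
  classical
  -- Swap the entries of each pair so that the smaller colour comes first.
  have sort_by_colour : discordance e = Finset.card {p : α × α | e p.1 < e p.2} := by
    refine Finset.card_nbij' (fun p ↦ if e p.1 < e p.2 then p else p.swap)
      (fun p ↦ if p.1 < p.2 then p else p.swap) ?_ ?_ ?_ ?_ <;>
    · rintro ⟨i, j⟩ h
      simp only [Finset.coe_filter, Set.mem_ofPred_eq, Finset.mem_univ, true_and] at h ⊢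
      split_ifs with h' <;> grind
  calc discordance e
    _ = ∑ i, Finset.card {j | e i < e j} := by
      simp only [sort_by_colour, Finset.card_filter, Fintype.sum_prod_type]
    _ = ∑ i, ∑ b ∈ Finset.Ioi (e i), letterCount e b :=
      Fintype.sum_congr _ _ fun i ↦ by
        rw [card_filter_comp, Finset.filter_lt_eq_Ioi]
    _ = ∑ a, ∑ b ∈ Finset.Ioi a, letterCount e a * letterCount e b := by
      rw [sum_comp_eq_sum_letterCount_nsmul e fun a ↦ ∑ b ∈ Finset.Ioi a, letterCount e b]
      simp only [smul_eq_mul, Finset.mul_sum]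

open MvPolynomial in
/-- Both sides are the coefficient of `X ^ v` in `(∑ a, X a) ^ card α`. -/
lemma card_letterCount_eq [DecidableEq S] [DecidableEq α] {v : S → ℕ}
    (hv : ∑ a, v a = Fintype.card α) :
    Finset.card {e : α → S | letterCount e = v} = Nat.multinomial Finset.univ v := by
  have prod_X_pow (w : S → ℕ) : ∏ a, (X a : MvPolynomial S ℕ) ^ w a =
      monomial (Finsupp.equivFunOnFinite.symm w) 1 := by
    rw [monomial_eq, map_one, one_mul, Finsupp.prod_fintype _ _ fun _ ↦ pow_zero _]
    rfl
  have prod_X (e : α → S) : ∏ i, (X (e i) : MvPolynomial S ℕ) =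
      monomial (Finsupp.equivFunOnFinite.symm (letterCount e)) 1 := by
    rw [← prod_X_pow, ← Finset.prod_fiberwise Finset.univ e]
    exact Fintype.prod_congr _ _ fun a ↦ Finset.prod_eq_pow_card fun i hi ↦ by
      rw [(Finset.mem_filter.1 hi).2]
  have expand : ∑ e : α → S, ∏ i, (X (e i) : MvPolynomial S ℕ) =
      ∑ w ∈ Finset.piAntidiag Finset.univ (Fintype.card α),
        (Nat.multinomial Finset.univ w : MvPolynomial S ℕ) * ∏ a, X a ^ w a := by
    rw [← Finset.sum_pow_eq_sum_piAntidiag, ← Finset.card_univ, ← Finset.prod_const,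
      Finset.prod_univ_sum, Fintype.piFinset_univ]
  have coeff_v := congrArg (coeff (Finsupp.equivFunOnFinite.symm v)) expand
  simp only [prod_X, prod_X_pow, coeff_sum, ← nsmul_eq_mul, coeff_smul, coeff_monomial,
    Equiv.apply_eq_iff_eq] at coeff_v
  rw [Finset.card_filter, coeff_v, Finset.sum_eq_single v]
  · simp
  · intro w _ hw
    simp [hw]
  · intro hv'
    simp [hv] at hv'

lemma branchSum_eq_sum_multinomial {R : Type*} [CommSemiring R] [LinearOrder α] [LinearOrder S]
    [LocallyFiniteOrderTop S] (q : R) (a : S) :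
    branchSum q α a =
      ∑ v ∈ Finset.piAntidiag Finset.univ (Fintype.card α),
        (Nat.multinomial Finset.univ v : R) * q ^ (∑ b, ∑ c ∈ Finset.Ioi b, v b * v c) *
          q ^ (∑ b with b ≠ a, v b) := by
  rw [branchSum, ← Finset.sum_fiberwise_of_maps_to (g := letterCount)
    (t := Finset.piAntidiag Finset.univ (Fintype.card α))
    fun e _ ↦ by simp [sum_letterCount]]
  refine Finset.sum_congr rfl fun v hv ↦ ?_
  rw [Finset.mem_piAntidiag] at hv
  rw [← card_letterCount_eq hv.1, ← nsmul_eq_mul, smul_mul_assoc, ← Finset.sum_const]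
  refine Finset.sum_congr rfl fun e he ↦ ?_
  rw [discordance_eq_sum_letterCount, card_filter_comp e (· ≠ a), (Finset.mem_filter.1 he).2,
    pow_add, mul_comm]

end Words

lemma branchSum_fin {s : ℕ} (q n : ℕ) (c : Fin s) :
    branchSum q (Fin n) c =
      ∑ v ∈ Finset.Nat.antidiagonalTuple s n,
        Nat.multinomial Finset.univ v *
          q ^ (∑ i : Fin s, ∑ j ∈ Finset.Ioi i, v i * v j) *
          q ^ (∑ j ∈ Finset.univ.filter (fun j : Fin s => j ≠ c), v j) := by
  simp [branchSum_eq_sum_multinomial, ← Finset.piAntidiag_univ_fin_eq_antidiagonalTuple]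

/-- The canonical isomorphism when the elements of `X` other than the minimum `x₀` form a copy
of `P`. -/
noncomputable def withBotOrderIso {P X : Type*} [PartialOrder P] [PartialOrder X] {x₀ : X}
    (f : P ↪o X) (hbot : ∀ x, x₀ ≤ x) (hf : ∀ p, ¬ f p ≤ x₀)
    (hcover : ∀ x, x = x₀ ∨ ∃ p, x = f p) : WithBot P ≃o X :=
  let g : WithBot P → X := WithBot.recBotCoe x₀ f
  RelIso.ofSurjective
    (OrderEmbedding.ofMapLEIff g fun x y ↦ by
      cases x <;> cases y <;> simp [g, hbot, hf])
    fun x ↦ by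
      obtain rfl | ⟨p, rfl⟩ := hcover x
      exacts [⟨⊥, rfl⟩, ⟨p, rfl⟩]

/-- `Fin (n + 1)` is the chain `Fin n` with a minimum added. -/
noncomputable def finSuccOrderIso (n : ℕ) : WithBot (Fin n) ≃o Fin (n + 1) :=
  withBotOrderIso (Fin.succOrderEmb n) Fin.zero_le (by simp)
    fun i ↦ (Fin.eq_zero_or_eq_succ i).imp_right fun ⟨j, hj⟩ ↦ ⟨j, hj⟩

/-- A family of chains, indexed by `ι` and with mutually incomparable members, embeds the disjoint
union of the chains. -/
def sigmaOrderEmbedding {ι X : Type*} {P : ι → Type*} [∀ t, PartialOrder (P t)] [PartialOrder X]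
    (z : ∀ t, P t → X) (hchain : ∀ t i j, z t i ≤ z t j ↔ i ≤ j)
    (hsep : ∀ t t' i j, t ≠ t' → ¬ z t i ≤ z t' j) : (Σ t, P t) ↪o X :=
  OrderEmbedding.ofMapLEIff (fun p ↦ z p.1 p.2) fun ⟨t, i⟩ ⟨t', j⟩ ↦ by
    obtain rfl | ht := eq_or_ne t t'
    · simp [hchain]
    · exact iff_of_false (hsep t t' i j ht) fun h ↦ ht (Sigma.le_def.1 h).1

section UpperTriangular

variable {R X : Type*} [Semiring R] [Fintype X] [DecidableEq X] [PartialOrder X]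
  [LocallyFiniteOrder X]

/-- Elements of the incidence algebra of a finite poset as matrices. -/
def incidenceToMatrix : IncidenceAlgebra R X →* Matrix X X R where
  toFun f := Matrix.of f
  map_one' := by ext i j; simp [Matrix.one_apply]
  map_mul' f g := by
    ext i j
    rw [Matrix.mul_apply, Matrix.of_apply, IncidenceAlgebra.mul_apply]
    refine Finset.sum_subset (Finset.subset_univ _) fun t _ ht ↦ ?_
    rw [Finset.mem_Icc, not_and_or] at ht
    obtain h | h := ht <;> simp [IncidenceAlgebra.apply_eq_zero_of_not_le h]

lemma incidenceToMatrix_injective :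
    Function.Injective (incidenceToMatrix : IncidenceAlgebra R X →* Matrix X X R) :=
  fun _ _ h ↦ DFunLike.coe_injective h

end UpperTriangular

lemma card_potent_upperTriangular {R X : Type*} [Semiring R] [Fintype X] [LinearOrder X]
    [LocallyFiniteOrder X] (n : ℕ) :
    Nat.card {A : Matrix X X R // A ^ n = A ∧ ∀ i j, j < i → A i j = 0} =
      Nat.card {f : IncidenceAlgebra R X // f ^ n = f} :=
  Nat.card_congr
    { toFun A := ⟨⟨A.1, fun i j h ↦ A.2.2 i j (not_le.1 h)⟩,
        incidenceToMatrix_injective (by rw [map_pow]; exact A.2.1)⟩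
      invFun f := ⟨incidenceToMatrix f.1, by rw [← map_pow, f.2],
        fun _ _ h ↦ IncidenceAlgebra.apply_eq_zero_of_not_le (not_le.2 h) f.1⟩
      left_inv _ := rfl
      right_inv _ := rfl }

theorem stmt_13_general {K : Type*} [Field K] [Fintype K] [DecidableEq K] {k s : ℕ}
    (hk : (k : K) ≠ 0) (hs : (Finset.univ.filter fun x : K => x ^ (k + 1) = x).card = s)
    {ι : Type*} [Fintype ι] [DecidableEq ι] (m : ι → ℕ) {X : Type*} [PartialOrder X]
    [DecidableEq X] [LocallyFiniteOrder X] (φ : WithBot (Σ t, Fin (m t)) ≃o X) (t₀ : ι)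
    (c : Fin s) :
    Nat.card {f : IncidenceAlgebra K X // f ^ (k + 1) = f}
      = Nat.card {A : Matrix (Fin (m t₀ + 1)) (Fin (m t₀ + 1)) K //
            A ^ (k + 1) = A ∧ ∀ i j, j < i → A i j = 0}
        * ∏ t ∈ Finset.univ.filter (fun t => t ≠ t₀),
            ∑ v ∈ Finset.Nat.antidiagonalTuple s (m t),
              Nat.multinomial Finset.univ v *
                Fintype.card K ^ (∑ i : Fin s, ∑ j ∈ Finset.Ioi i, v i * v j) *
                Fintype.card K ^ (∑ j ∈ Finset.univ.filter (fun j : Fin s => j ≠ c), v j) := by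
  have : Fintype X := Fintype.ofEquiv _ φ.toEquiv
  have colours : {a : K // a ^ (k + 1) = a} ≃ Fin s :=
    Fintype.equivFinOfCardEq (by rw [Fintype.card_subtype, hs])
  rw [card_potent_upperTriangular, card_potent_incidenceAlgebra hk,
    card_potent_incidenceAlgebra hk, colouringSum_congr _ φ.symm colours,
    colouringSum_congr _ (finSuccOrderIso (m t₀)).symm colours,
    colouringSum_withBot_sigma _ t₀ c, Nat.card_eq_fintype_card]
  simp only [branchSum_fin]


/-- Counting `(k+1)`-potent elements of the incidence algebra of the `r`-branched star poset:
a minimum `x₀` together with `r` chains `z t : Fin (m t) → X` above it, elements of distinct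
chains being incomparable. Their number equals `N(m₁ + 1) · ∏_{t=2}^{r} P(m_t)`, where
`N(m₁+1)` is the number of `(m₁+1)×(m₁+1)` upper triangular `(k+1)`-potent matrices over `K`
(the first chain playing the role of the interval containing `x₀`), and
`P(c) = ∑_{c₁+⋯+c_s = c} (c!/(c₁!⋯c_s!)) · q^(∑_{i<j} c_i c_j) · q^(c₂+⋯+c_s)`. -/
theorem stmt_13 {K : Type*} [Field K] [Fintype K] [DecidableEq K] (q k s r : ℕ)
    (m : Fin r → ℕ)
    (hq : Fintype.card K = q) (hk : 1 ≤ k)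
    (hchar_k : (k : K) ≠ 0) (hchar_k1 : ((k + 1 : ℕ) : K) ≠ 0)
    (hs : (Finset.univ.filter (fun x : K => x ^ (k + 1) = x)).card = s) (hs0 : 0 < s)
    (hr : 0 < r)
    (X : Type*) [Fintype X] [PartialOrder X] [DecidableEq X] [LocallyFiniteOrder X]
    (x₀ : X) (z : (t : Fin r) → Fin (m t) → X)
    (hbot : ∀ w : X, x₀ ≤ w)
    (hchain : ∀ t i j, z t i ≤ z t j ↔ i ≤ j)
    (hsep : ∀ t t' i j, t ≠ t' → ¬ z t i ≤ z t' j)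
    (htop : ∀ t i, ¬ z t i ≤ x₀)
    (hinj : ∀ t, Function.Injective (z t))
    (hcover : ∀ w : X, w = x₀ ∨ ∃ t i, w = z t i) :
    Nat.card {f : IncidenceAlgebra K X // f ^ (k + 1) = f}
      = Nat.card {A : Matrix (Fin (m ⟨0, hr⟩ + 1)) (Fin (m ⟨0, hr⟩ + 1)) K //
            A ^ (k + 1) = A ∧ ∀ i j, j < i → A i j = 0}
        * ∏ t ∈ Finset.univ.filter (fun t : Fin r => t ≠ ⟨0, hr⟩),
            ∑ v ∈ Finset.Nat.antidiagonalTuple s (m t),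
              Nat.multinomial Finset.univ v *
                q ^ (∑ i : Fin s, ∑ j ∈ Finset.Ioi i, v i * v j) *
                q ^ (∑ j ∈ Finset.univ.filter (fun j : Fin s => j ≠ ⟨0, hs0⟩), v j) := by
  subst hq
  let star := sigmaOrderEmbedding z hchain hsep
  exact stmt_13_general hchar_k hs m (withBotOrderIso star hbot (fun p ↦ htop p.1 p.2)
    fun w ↦ (hcover w).imp_right fun ⟨t, i, h⟩ ↦ ⟨⟨t, i⟩, h⟩) ⟨0, hr⟩ ⟨0, hs0⟩
end
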